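/- Let G be the group presented by the generating set S and relation set R of Theorem 2.14 (the presentation of the virtual Thompson group VF) as described in the context. Then the abelianization of G (the quotient of G by its commutator subgroup) is a free abelian group, i.e. it is isomorphic to a direct sum of copies of ℤ. -/

import Mathlib

/-- The alphabet Σ = {x, v}. -/
inductive Letter : Type
  | x | v
deriving DecidableEq

/-- Words on Σ (possibly empty). -/
abbrev Word := List Letter

/-- A target word t ∈ {xx, xv, vx, vv}, encoded as the pair of its two letters. -/
abbrev Tgt := Letter × Letter

/-- The word (of length two) corresponding to a target. -/
def tw (t : Tgt) : Word := [t.1, t.2]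

/-- Index for the three generators of family (i): X_{v→vv}, X_{v→vx}, X_{v→xv}. -/
inductive G1 : Type
  | vv   -- X_{v→vv}
  | vx   -- X_{v→vx}
  | xv   -- X_{v→xv}
deriving DecidableEq

/-- Index for the four kinds of generators of family (iii):
X_{x→vv,u}, X_{x→vx,u}, X_{v→xx,u}, X_{v→xv,u}. -/
inductive G3 : Type
  | xvv  -- X_{x→vv,u}
  | xvx  -- X_{x→vx,u}
  | vxx  -- X_{v→xx,u}
  | vxv  -- X_{v→xv,u}
deriving DecidableEq

/-- The generating set S of the presentation of the virtual Thompson group VF. -/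
inductive Gen : Type
  /-- family (i): X_{v→vv}, X_{v→vx}, X_{v→xv} -/
  | fam1 : G1 → Gen
  /-- family (ii): X_{a, s→t, u} with a ∈ {x,v}, s ∈ {x,v}, t ∈ {xx,xv,vx,vv}, u any word -/
  | fam2 : Letter → Letter → Tgt → Word → Gen
  /-- family (iii): X_{c, u} with c one of x→vv, x→vx, v→xx, v→xv and u a nonempty word -/
  | fam3 : G3 → {u : Word // u ≠ []} → Gen

/-- The corresponding generator of the free group on S. -/
def X (g : Gen) : FreeGroup Gen := FreeGroup.of g

open Letter in
/-- The relators of the presentation of VF (each relation A·B = C·D becomes the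
relator A·B·(C·D)⁻¹). -/
inductive VFRel : FreeGroup Gen → Prop
  /-- (R1) and (R2): for a ∈ {x, v},
  X_{a,s₁→t₁, p s₂ q} X_{a,s₂→t₂, q} = X_{a,s₂→t₂, q} X_{a,s₁→t₁, p t₂ q}. -/
  | r12 (a s₁ s₂ : Letter) (t₁ t₂ : Tgt) (p q : Word) :
      VFRel (X (.fam2 a s₁ t₁ (p ++ [s₂] ++ q)) * X (.fam2 a s₂ t₂ q) *
        (X (.fam2 a s₂ t₂ q) * X (.fam2 a s₁ t₁ (p ++ tw t₂ ++ q)))⁻¹)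
  /-- (R3): X_{x,s→t,q} X_{x→vv, p t q} = X_{x→vv, p s q} X_{v,s→t,q}. -/
  | r3 (s : Letter) (t : Tgt) (p q : Word) :
      VFRel (X (.fam2 x s t q) * X (.fam3 .xvv ⟨p ++ tw t ++ q, by simp [tw]⟩) *
        (X (.fam3 .xvv ⟨p ++ [s] ++ q, by simp⟩) * X (.fam2 v s t q))⁻¹)
  /-- (R4): X_{x,s→t,q} X_{x→vx, p t q} = X_{x→vx, p s q} X_{v,s→t,q}. -/
  | r4 (s : Letter) (t : Tgt) (p q : Word) :
      VFRel (X (.fam2 x s t q) * X (.fam3 .xvx ⟨p ++ tw t ++ q, by simp [tw]⟩) *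
        (X (.fam3 .xvx ⟨p ++ [s] ++ q, by simp⟩) * X (.fam2 v s t q))⁻¹)
  /-- (R5): X_{v,s→t,q} X_{v→xx, p t q} = X_{v→xx, p s q} X_{x,s→t,q}. -/
  | r5 (s : Letter) (t : Tgt) (p q : Word) :
      VFRel (X (.fam2 v s t q) * X (.fam3 .vxx ⟨p ++ tw t ++ q, by simp [tw]⟩) *
        (X (.fam3 .vxx ⟨p ++ [s] ++ q, by simp⟩) * X (.fam2 x s t q))⁻¹)
  /-- (R6): X_{v,s→t,q} X_{v→xv, p t q} = X_{v→xv, p s q} X_{x,s→t,q}. -/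
  | r6 (s : Letter) (t : Tgt) (p q : Word) :
      VFRel (X (.fam2 v s t q) * X (.fam3 .vxv ⟨p ++ tw t ++ q, by simp [tw]⟩) *
        (X (.fam3 .vxv ⟨p ++ [s] ++ q, by simp⟩) * X (.fam2 x s t q))⁻¹)

/-- The set of relators. -/
def VFrels : Set (FreeGroup Gen) := {g | VFRel g}

/-- The virtual Thompson group VF, as the presented group ⟨S | R⟩. -/
abbrev VF := PresentedGroup VFrels

namespace VFProof
open Letter

/-- Index set of the basis. -/
inductive Idx : Type
  | one : G1 → Idx
  | two : Letter → Tgt → Bool → Idx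
  | wt : Letter → Idx
  | k : Idx
  | three : G3 → Idx

abbrev M := Idx →₀ ℤ

noncomputable def e (i : Idx) : M := Finsupp.single i 1

/-- Whether a word is nonempty. -/
def ne : Word → Bool
  | [] => false
  | _ :: _ => true

noncomputable def gl : Letter → M
  | x => 0
  | v => e .k

noncomputable def phi : Word → M
  | [] => 0
  | [y] => gl y
  | y :: z :: q => e (.wt y) + phi (z :: q)

noncomputable def D (s : Letter) (t : Tgt) : Bool → M
  | true => e (.wt s) - e (.wt t.1) - e (.wt t.2)
  | false => gl s - e (.wt t.1) - gl t.2

lemma phi_cons (y : Letter) (q : Word) (h : q ≠ []) : phi (y :: q) = e (.wt y) + phi q := by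
  cases q with
  | nil => exact absurd rfl h
  | cons z q => rfl

lemma phi_rel (s : Letter) (t : Tgt) (p q : Word) :
    phi (p ++ [s] ++ q) = phi (p ++ tw t ++ q) + D s t (ne q) := by
  induction p with
  | nil =>
    cases q with
    | nil => simp [tw, phi, D, ne]
    | cons z q => simp [tw, phi, D, ne]; abel
  | cons y p ih =>
    have h1 : p ++ [s] ++ q ≠ [] := by simp
    have h2 : p ++ tw t ++ q ≠ [] := by simp [tw]
    simp only [List.cons_append]
    rw [phi_cons _ _ h1, phi_cons _ _ h2, ih]; abel

noncomputable def fwd : Gen → M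
  | .fam1 i => e (.one i)
  | .fam2 x s t u => e (.two s t (ne u)) + D s t (ne u)
  | .fam2 v s t u => e (.two s t (ne u))
  | .fam3 .xvv u => e (.three .xvv) + phi u.1
  | .fam3 .xvx u => e (.three .xvx) + phi u.1
  | .fam3 .vxx u => e (.three .vxx) - phi u.1
  | .fam3 .vxv u => e (.three .vxv) - phi u.1

lemma ne_mid (s : Letter) (t : Tgt) (p q : Word) : ne (p ++ [s] ++ q) = ne (p ++ tw t ++ q) := by
  cases p <;> simp [ne, tw]

lemma fwd_rel (r : FreeGroup Gen) (hr : r ∈ VFrels) :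
    FreeGroup.lift (fun g => Multiplicative.ofAdd (fwd g)) r = 1 := by
  have hr' : VFRel r := hr
  cases hr' with
  | r12 a s₁ s₂ t₁ t₂ p q =>
    simp only [map_mul, map_inv, X, FreeGroup.lift_apply_of]
    rw [mul_inv_eq_one, mul_comm]
    congr 2
    cases a <;> simp only [fwd, ne_mid s₂ t₂ p q]
  | r3 s t p q =>
    simp only [map_mul, map_inv, X, FreeGroup.lift_apply_of]
    rw [mul_inv_eq_one, ← ofAdd_add, ← ofAdd_add]
    congr 1
    simp only [fwd, phi_rel s t p q]; abel
  | r4 s t p q =>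
    simp only [map_mul, map_inv, X, FreeGroup.lift_apply_of]
    rw [mul_inv_eq_one, ← ofAdd_add, ← ofAdd_add]
    congr 1
    simp only [fwd, phi_rel s t p q]; abel
  | r5 s t p q =>
    simp only [map_mul, map_inv, X, FreeGroup.lift_apply_of]
    rw [mul_inv_eq_one, ← ofAdd_add, ← ofAdd_add]
    congr 1
    simp only [fwd, phi_rel s t p q]; abel
  | r6 s t p q =>
    simp only [map_mul, map_inv, X, FreeGroup.lift_apply_of]
    rw [mul_inv_eq_one, ← ofAdd_add, ← ofAdd_add]
    congr 1
    simp only [fwd, phi_rel s t p q]; abel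

abbrev H := Additive (Abelianization VF)

def gen (g : Gen) : H := Additive.ofMul (Abelianization.of (PresentedGroup.of g))

noncomputable def Fwd : H →+ M :=
  MonoidHom.toAdditiveLeft (Abelianization.lift (PresentedGroup.toGroup fwd_rel))

lemma Fwd_gen (g : Gen) : Fwd (gen g) = fwd g := by
  simp [Fwd, gen]

lemma hom_ext {N : Type*} [AddCommGroup N] {f g : H →+ N} (h : ∀ a, f (gen a) = g (gen a)) :
    f = g := by
  apply MonoidHom.toAdditiveLeft.symm.injective
  apply Abelianization.hom_ext
  apply PresentedGroup.ext
  intro a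
  exact congrArg Multiplicative.ofAdd (h a)

lemma rel_gen {a b c d : Gen} (h : VFRel (X a * X b * (X c * X d)⁻¹)) :
    gen a + gen b = gen c + gen d := by
  have h1 : PresentedGroup.mk VFrels (X a * X b * (X c * X d)⁻¹) = 1 :=
    PresentedGroup.one_of_mem h
  rw [map_mul, map_inv, mul_inv_eq_one, map_mul, map_mul] at h1
  have h2 := congrArg (fun z => Additive.ofMul (Abelianization.of z)) h1
  simp only [map_mul, ofMul_mul] at h2
  exact h2

def A (a s : Letter) (t : Tgt) (u : Word) : H := gen (.fam2 a s t u)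

def B (c : G3) : Word → H
  | [] => 0
  | y :: q => gen (.fam3 c ⟨y :: q, by simp⟩)

lemma B_eq (c : G3) (u : Word) (h : u ≠ []) : B c u = gen (.fam3 c ⟨u, h⟩) := by
  cases u with
  | nil => exact absurd rfl h
  | cons y q => rfl

/-- A function invariant under all the moves is constant on nonempty words. -/
lemma const_of_inv {N : Type*} (F : Word → N)
    (hF : ∀ s t p q, F (p ++ [s] ++ q) = F (p ++ tw t ++ q)) :
    ∀ (n : ℕ) (u : Word), u.length = n + 1 → F u = F [x] := by
  intro n
  induction n with
  | zero =>
    intro u hu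
    obtain ⟨y, rfl⟩ := List.length_eq_one_iff.mp hu
    exact (hF y (x, x) [] []).trans (hF x (x, x) [] []).symm
  | succ n ih =>
    intro u hu
    match u, hu with
    | y :: z :: q, hu =>
      have h1 := hF x (y, z) [] q
      have h2 := ih (x :: q) (by simpa using hu)
      exact h1.symm.trans h2

lemma const_of_inv' {N : Type*} (F : Word → N)
    (hF : ∀ s t p q, F (p ++ [s] ++ q) = F (p ++ tw t ++ q)) (u : Word) (hu : u ≠ []) :
    F u = F [x] := by
  cases u with
  | nil => exact absurd rfl hu
  | cons y q => exact const_of_inv F hF q.length _ rfl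

lemma A_inv (a s₁ s₂ : Letter) (t₁ t₂ : Tgt) (p q : Word) :
    A a s₁ t₁ (p ++ [s₂] ++ q) = A a s₁ t₁ (p ++ tw t₂ ++ q) := by
  have h := rel_gen (VFRel.r12 a s₁ s₂ t₁ t₂ p q)
  rw [add_comm] at h
  exact add_left_cancel h

def rep : Bool → Word
  | true => [x]
  | false => []

lemma A_rep (a s : Letter) (t : Tgt) (u : Word) : A a s t u = A a s t (rep (ne u)) := by
  cases u with
  | nil => rfl
  | cons y q => exact const_of_inv' (A a s t) (fun s₂ t₂ p q => A_inv a s s₂ t t₂ p q) _ (by simp)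

def d (s : Letter) (t : Tgt) (q : Word) : H := A x s t q - A v s t q

lemma B_xvv (s : Letter) (t : Tgt) (p q : Word) :
    B .xvv (p ++ [s] ++ q) = B .xvv (p ++ tw t ++ q) + d s t q := by
  have h := rel_gen (VFRel.r3 s t p q)
  rw [← B_eq, ← B_eq] at h
  rw [d, A, A, ← add_sub_assoc, eq_sub_iff_add_eq, ← h, add_comm]

lemma B_xvx (s : Letter) (t : Tgt) (p q : Word) :
    B .xvx (p ++ [s] ++ q) = B .xvx (p ++ tw t ++ q) + d s t q := by
  have h := rel_gen (VFRel.r4 s t p q)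
  rw [← B_eq, ← B_eq] at h
  rw [d, A, A, ← add_sub_assoc, eq_sub_iff_add_eq, ← h, add_comm]

lemma B_vxx (s : Letter) (t : Tgt) (p q : Word) :
    B .vxx (p ++ [s] ++ q) = B .vxx (p ++ tw t ++ q) - d s t q := by
  have h := rel_gen (VFRel.r5 s t p q)
  rw [← B_eq, ← B_eq] at h
  rw [d, A, A, ← sub_add, sub_add_eq_add_sub, eq_sub_iff_add_eq, ← h, add_comm]

lemma B_vxv (s : Letter) (t : Tgt) (p q : Word) :
    B .vxv (p ++ [s] ++ q) = B .vxv (p ++ tw t ++ q) - d s t q := by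
  have h := rel_gen (VFRel.r6 s t p q)
  rw [← B_eq, ← B_eq] at h
  rw [d, A, A, ← sub_add, sub_add_eq_add_sub, eq_sub_iff_add_eq, ← h, add_comm]

def bwd : Idx → H
  | .one i => gen (.fam1 i)
  | .two s t b => A v s t (rep b)
  | .wt l => B .xvv [l, x] - B .xvv [x]
  | .k => B .xvv [v] - B .xvv [x]
  | .three .xvv => B .xvv [x]
  | .three .xvx => B .xvx [x]
  | .three .vxx => B .vxx [x]
  | .three .vxv => B .vxv [x]

noncomputable def Bwd : M →+ H :=
  Finsupp.liftAddHom (fun i => (zmultiplesHom H) (bwd i))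

lemma Bwd_e (i : Idx) : Bwd (e i) = bwd i := by
  simp [Bwd, e]

lemma Bwd_gl (y : Letter) : Bwd (gl y) = B .xvv [y] - B .xvv [x] := by
  cases y <;> simp [gl, Bwd_e, bwd]

lemma B_cons (l : Letter) (q : Word) (hq : q ≠ []) :
    B .xvv (l :: q) - B .xvv q = B .xvv [l, x] - B .xvv [x] := by
  refine const_of_inv' (fun q => B .xvv (l :: q) - B .xvv q) ?_ q hq
  intro s t p q
  have h1 := B_xvv s t (l :: p) q
  have h2 := B_xvv s t p q
  simp only [List.cons_append] at h1
  simp only [h1, h2]; abel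

lemma Bwd_phi (u : Word) (hu : u ≠ []) : Bwd (phi u) = B .xvv u - B .xvv [x] := by
  induction u with
  | nil => exact absurd rfl hu
  | cons y q ih =>
    cases q with
    | nil => exact Bwd_gl y
    | cons z q =>
      rw [phi_cons _ _ (by simp), map_add, ih (by simp), Bwd_e, bwd,
        ← B_cons y (z :: q) (by simp)]
      abel

lemma Bwd_D (s : Letter) (t : Tgt) (b : Bool) : Bwd (D s t b) = d s t (rep b) := by
  have h := phi_rel s t [] (rep b)
  have hb : ne (rep b) = b := by cases b <;> rfl
  rw [hb] at h
  have h2 := congrArg Bwd h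
  rw [map_add, Bwd_phi _ (by simp), Bwd_phi _ (by simp [tw]), B_xvv s t [] (rep b)] at h2
  have h3 : ∀ a b c d : H, a + b - c = a - c + d → d = b := by
    intro a b c d h
    have : a - c + d = a - c + b := by rw [← h]; abel
    exact add_left_cancel this
  exact h3 _ _ _ _ h2

lemma Bwd_fwd (g : Gen) : Bwd (fwd g) = gen g := by
  match g with
  | .fam1 i => exact Bwd_e _
  | .fam2 x s t u =>
    rw [fwd, map_add, Bwd_D, Bwd_e, bwd, d, add_sub_cancel, ← A_rep]; rfl
  | .fam2 v s t u =>
    rw [fwd, Bwd_e, bwd, ← A_rep]; rfl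
  | .fam3 .xvv ⟨u, hu⟩ =>
    rw [fwd, map_add, Bwd_e, bwd, Bwd_phi _ hu, add_sub_cancel, B_eq]
  | .fam3 .xvx ⟨u, hu⟩ =>
    have h := const_of_inv' (fun u => B .xvx u - B .xvv u) (by
      intro s t p q
      simp only [B_xvx s t p q, B_xvv s t p q]; abel) u hu
    rw [fwd, map_add, Bwd_e, bwd, Bwd_phi _ hu, ← B_eq, ← sub_add_cancel (B .xvx u) (B .xvv u)]
    rw [h]; abel
  | .fam3 .vxx ⟨u, hu⟩ =>
    have h := const_of_inv' (fun u => B .vxx u + B .xvv u) (by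
      intro s t p q
      simp only [B_vxx s t p q, B_xvv s t p q]; abel) u hu
    rw [fwd, map_sub, Bwd_e, bwd, Bwd_phi _ hu, ← B_eq, ← add_sub_cancel_right (B .vxx u) (B .xvv u)]
    rw [h]; abel
  | .fam3 .vxv ⟨u, hu⟩ =>
    have h := const_of_inv' (fun u => B .vxv u + B .xvv u) (by
      intro s t p q
      simp only [B_vxv s t p q, B_xvv s t p q]; abel) u hu
    rw [fwd, map_sub, Bwd_e, bwd, Bwd_phi _ hu, ← B_eq, ← add_sub_cancel_right (B .vxv u) (B .xvv u)]
    rw [h]; abel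

lemma Fwd_B_xvv (y : Letter) (q : Word) :
    Fwd (B .xvv (y :: q)) = e (.three .xvv) + phi (y :: q) := Fwd_gen _

lemma Fwd_bwd (i : Idx) : Fwd (bwd i) = e i := by
  match i with
  | .one i => exact Fwd_gen _
  | .two s t b =>
    rw [bwd, A, Fwd_gen, fwd]
    cases b <;> rfl
  | .wt l =>
    rw [bwd, map_sub, Fwd_B_xvv, Fwd_B_xvv]
    simp [phi, gl]
  | .k =>
    rw [bwd, map_sub, Fwd_B_xvv, Fwd_B_xvv]
    simp [phi, gl]
  | .three .xvv => rw [bwd, B, Fwd_gen]; simp [fwd, phi, gl]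
  | .three .xvx => rw [bwd, B, Fwd_gen]; simp [fwd, phi, gl]
  | .three .vxx => rw [bwd, B, Fwd_gen]; simp [fwd, phi, gl]
  | .three .vxv => rw [bwd, B, Fwd_gen]; simp [fwd, phi, gl]

lemma left_inv : Bwd.comp Fwd = AddMonoidHom.id H :=
  hom_ext (fun a => by simp [Fwd_gen, Bwd_fwd])

lemma right_inv : Fwd.comp Bwd = AddMonoidHom.id M := by
  apply Finsupp.addHom_ext'
  intro i
  ext
  have h := Fwd_bwd i
  rw [← Bwd_e] at h
  exact DFunLike.congr_fun h _

end VFProof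

/-- The abelianization of VF is free abelian: it is isomorphic to a direct sum of
copies of ℤ (indexed by some type ι). -/
theorem VF_abelianization_free_abelian :
    ∃ ι : Type, Nonempty (Additive (Abelianization VF) ≃+ (ι →₀ ℤ)) := by
  exact ⟨VFProof.Idx, ⟨AddMonoidHom.toAddEquiv VFProof.Fwd VFProof.Bwd
    VFProof.left_inv VFProof.right_inv⟩⟩
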